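/- Let k be an algebraic closure of F, let m ≥ 1, and let v = (v_1,…,v_n) ∈ F^n. The zero set in k³ of the ideal I = ⟨X^{q+1} − Y^q − Y⟩ + ⟨Z − H_v, X^{q²} − X⟩^m of k[X,Y,Z] is exactly {(α_i, β_i, v_i) : 1 ≤ i ≤ n}. -/

import Mathlib

open MvPolynomial

/-- The polynomial `H_i ∈ F[X,Y]` attached to the rational point `(α, β)` of the Hermitian
curve: `H = −∏_{a ∈ F, a ≠ α} (X − a) · ∏_{b ∈ F, b ≠ β, b^q + b = β^q + β} (Y − b)`. -/
noncomputable def Hpoly (q : ℕ) {F : Type*} [Field F] [Fintype F] [DecidableEq F]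
    (α β : F) : MvPolynomial (Fin 2) F :=
  -((∏ a ∈ Finset.univ.erase α, (X 0 - C a)) *
    ∏ b ∈ (Finset.univ.filter fun b : F => b ^ q + b = β ^ q + β).erase β, (X 1 - C b))

/-- A monic divisor of `X^|F| - X` is the product over its roots; evaluating the derivative. -/
lemma prod_erase_aux {F : Type*} [Field F] [Fintype F] [DecidableEq F]
    (g : Polynomial F) (hg : g.Monic)
    (hd : g ∣ Polynomial.X ^ Fintype.card F - Polynomial.X)
    (S : Finset F) (hS : ∀ b, b ∈ S ↔ g.eval b = 0) (β : F) (hβ : β ∈ S) :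
    ∏ b ∈ S.erase β, (β - b) = g.derivative.eval β := by
  have hne : (Polynomial.X ^ Fintype.card F - Polynomial.X : Polynomial F) ≠ 0 :=
    FiniteField.X_pow_card_sub_X_ne_zero F Fintype.one_lt_card
  have hspl : (Polynomial.X ^ Fintype.card F - Polynomial.X : Polynomial F).Splits := by
    rw [Polynomial.splits_iff_card_roots, FiniteField.roots_X_pow_card_sub_X,
      FiniteField.X_pow_card_sub_X_natDegree_eq F Fintype.one_lt_card]
    rfl
  have hgs : g.Splits := hspl.of_dvd hne hd
  have hle := Polynomial.roots.le_of_dvd hne hd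
  rw [FiniteField.roots_X_pow_card_sub_X] at hle
  have hnd : g.roots.Nodup := Multiset.nodup_of_le hle Finset.univ.nodup
  have hr : g.roots = S.val := by
    refine (Multiset.Nodup.ext hnd S.nodup).2 fun b => ?_
    rw [Polynomial.mem_roots hg.ne_zero, Finset.mem_val, hS]
    rfl
  have hprod : g = ∏ b ∈ S, (Polynomial.X - Polynomial.C b) := by
    have := hgs.eq_prod_roots_of_monic hg
    rw [hr] at this
    exact this
  rw [← Finset.mul_prod_erase S _ hβ] at hprod
  rw [hprod]
  simp [Polynomial.eval_prod]

lemma charP_facts (q : ℕ) (hq : IsPrimePow q) (F : Type*) [Field F] [Fintype F]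
    (hF : Fintype.card F = q ^ 2) :
    ∃ p n : ℕ, p.Prime ∧ CharP F p ∧ n ≠ 0 ∧ q = p ^ n := by
  obtain ⟨r, j, hr, hj, rfl⟩ := hq
  obtain ⟨p, hc⟩ := CharP.exists F
  obtain ⟨n, hp, hn⟩ := FiniteField.card F p
  have : p ∣ r := by
    have h1 : p ∣ (r ^ j) ^ 2 := by
      rw [← hF, hn]; exact dvd_pow_self _ n.pos.ne'
    exact hp.dvd_of_dvd_pow (hp.dvd_of_dvd_pow h1)
  have := (Nat.prime_dvd_prime_iff_eq hp hr.nat_prime).1 this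
  subst this
  exact ⟨p, j, hp, hc, hj.ne', rfl⟩

lemma Hpoly_eval_self (q : ℕ) (hq : IsPrimePow q) {F : Type*} [Field F] [Fintype F]
    [DecidableEq F] (hF : Fintype.card F = q ^ 2) (α β : F) :
    MvPolynomial.eval ![α, β] (Hpoly q α β) = 1 := by
  obtain ⟨p, n, hp, hc, hn, hqp⟩ := charP_facts q hq F hF
  haveI : Fact p.Prime := ⟨hp⟩
  have hq1 : 1 < q := hq.one_lt
  have hq0 : (q : F) = 0 := by rw [hqp]; simp [hn]
  have hfr : ∀ x : F, (x ^ q) ^ q = x := fun x => by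
    rw [← pow_mul, ← sq, ← hF, FiniteField.pow_card]
  have h1 : ∏ a ∈ Finset.univ.erase α, (α - a) = -1 := by
    rw [prod_erase_aux (Polynomial.X ^ Fintype.card F - Polynomial.X) ?_ dvd_rfl _ ?_ α
      (Finset.mem_univ _)]
    · simp [Polynomial.derivative_X_pow, hF, hq0]
    · apply Polynomial.monic_X_pow_sub
      rw [Polynomial.degree_X]; exact_mod_cast Fintype.one_lt_card
    · intro b; simp [FiniteField.pow_card]
  have h2 : ∏ b ∈ (Finset.univ.filter fun b : F => b ^ q + b = β ^ q + β).erase β, (β - b)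
      = 1 := by
    rw [prod_erase_aux (Polynomial.X ^ q + (Polynomial.X - Polynomial.C (β ^ q + β))) ?_ ?_ _ ?_ β
      (by simp)]
    · rw [Polynomial.derivative_add, Polynomial.derivative_X_sub_C, Polynomial.derivative_X_pow]
      simp [hq0]
    · apply Polynomial.monic_X_pow_add
      rw [Polynomial.degree_X_sub_C]; exact_mod_cast hq1
    · set t := β ^ q + β with ht
      have htq : t ^ q = t := by
        rw [ht]
        conv_lhs => rw [hqp, add_pow_char_pow, ← hqp, hfr]
        ring
      set g : Polynomial F := Polynomial.X ^ q + (Polynomial.X - Polynomial.C t) with hg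
      have : (Polynomial.X ^ Fintype.card F - Polynomial.X : Polynomial F) = g ^ q - g := by
        have : g ^ q = (Polynomial.X ^ q) ^ q + (Polynomial.X ^ q - Polynomial.C t) := by
          rw [hg]
          conv_lhs => rw [hqp, add_pow_char_pow, sub_pow_char_pow, ← hqp, ← Polynomial.C_pow, htq]
        rw [this, hg, hF, sq, pow_mul]; ring
      rw [this]
      exact dvd_sub (dvd_pow_self _ (by omega)) dvd_rfl
    · intro b; simp [← add_sub_assoc, sub_eq_zero]
  simp [Hpoly, eval_prod, h1, h2]

lemma Hpoly_eval_ne (q : ℕ) {F : Type*} [Field F] [Fintype F]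
    [DecidableEq F] (α β a b : F) (h1 : α ^ (q + 1) = β ^ q + β) (h2 : a ^ (q + 1) = b ^ q + b)
    (hne : (α, β) ≠ (a, b)) :
    MvPolynomial.eval ![a, b] (Hpoly q α β) = 0 := by
  simp only [Hpoly, map_neg, map_mul, eval_prod, map_sub, eval_X, eval_C, neg_eq_zero,
    mul_eq_zero, Finset.prod_eq_zero_iff]
  by_cases h : a = α
  · right
    subst h
    refine ⟨b, ?_, by simp⟩
    rw [Finset.mem_erase]
    refine ⟨fun h => hne (by rw [h]), by simp [← h1, ← h2]⟩
  · left
    exact ⟨a, by simp [h], by simp⟩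

/-- Let `k` be an algebraic closure of `F`, let `m ≥ 1`, and let `v ∈ F^n`. The zero set in
`k³` of the ideal `I = ⟨X^{q+1} − Y^q − Y⟩ + ⟨Z − H_v, X^{q²} − X⟩^m` of `k[X,Y,Z]` is
exactly `{(α_i, β_i, v_i) : 1 ≤ i ≤ n}`. -/
theorem stmt_5 (q : ℕ) (hq : IsPrimePow q) (F : Type*) [Field F] [Fintype F] [DecidableEq F]
    (hF : Fintype.card F = q ^ 2)
    (k : Type*) [Field k] [Algebra F k] [IsAlgClosure F k]
    (m : ℕ) (hm : 1 ≤ m)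
    (P : Fin (q ^ 3) → F × F)
    (hPinj : Function.Injective P)
    (hPcurve : ∀ i, (P i).1 ^ (q + 1) = (P i).2 ^ q + (P i).2)
    (hPsurj : ∀ a b : F, a ^ (q + 1) = b ^ q + b → ∃ i, P i = (a, b))
    (v : Fin (q ^ 3) → F) :
    {p : Fin 3 → k | ∀ f ∈ Ideal.span {(X 0 : MvPolynomial (Fin 3) k) ^ (q + 1) - X 1 ^ q - X 1}
        + (Ideal.span {X 2 - MvPolynomial.map (algebraMap F k)
              (MvPolynomial.rename (Fin.castSucc : Fin 2 → Fin 3)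
                (∑ i, C (v i) * Hpoly q (P i).1 (P i).2)),
            (X 0 : MvPolynomial (Fin 3) k) ^ (q ^ 2) - X 0}) ^ m,
      MvPolynomial.eval p f = 0} =
    {p : Fin 3 → k | ∃ i, p =
      ![algebraMap F k (P i).1, algebraMap F k (P i).2, algebraMap F k (v i)]} := by
  obtain ⟨p, n, hp, hc, hn, hqp⟩ := charP_facts q hq F hF
  haveI : Fact p.Prime := ⟨hp⟩
  haveI : CharP k p := charP_of_injective_algebraMap (algebraMap F k).injective p
  have hH : ∀ i (w : k), MvPolynomial.eval
      ![algebraMap F k (P i).1, algebraMap F k (P i).2, w]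
      (MvPolynomial.map (algebraMap F k)
              (MvPolynomial.rename (Fin.castSucc : Fin 2 → Fin 3)
                (∑ i, C (v i) * Hpoly q (P i).1 (P i).2))) = algebraMap F k (v i) := by
    intro i w
    rw [eval_map, eval₂_rename]
    have : (![algebraMap F k (P i).1, algebraMap F k (P i).2, w] ∘ (Fin.castSucc : Fin 2 → Fin 3))
        = algebraMap F k ∘ ![(P i).1, (P i).2] := by
      ext j; fin_cases j <;> rfl
    rw [this, ← eval₂_comp]
    congr 1
    rw [map_sum, Finset.sum_eq_single i]
    · simp [Hpoly_eval_self q hq hF]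
    · intro j _ hj
      rw [map_mul, Hpoly_eval_ne q _ _ _ _ (hPcurve j) (hPcurve i), mul_zero]
      exact fun h => hj (hPinj h)
    · simp
  ext x
  rw [Set.mem_ofPred_eq, Set.mem_ofPred_eq]
  change (_ ≤ RingHom.ker (MvPolynomial.eval x)) ↔ _
  haveI := RingHom.ker_isPrime (MvPolynomial.eval x)
  rw [Submodule.add_eq_sup, sup_le_iff, Ideal.IsPrime.pow_le_iff (by omega), Ideal.span_le,
    Ideal.span_le, Set.singleton_subset_iff, Set.insert_subset_iff, Set.singleton_subset_iff]
  simp only [SetLike.mem_coe, RingHom.mem_ker, map_sub, map_pow, eval_X]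
  constructor
  · rintro ⟨h1, h2, h3⟩
    have key : ∀ y : k, y ^ q ^ 2 - y = 0 → ∃ a : F, algebraMap F k a = y := by
      intro y hy
      have hpr : (Polynomial.X ^ Fintype.card F - Polynomial.X : Polynomial F)
          = ∏ a : F, (Polynomial.X - Polynomial.C a) := by
        have hspl : (Polynomial.X ^ Fintype.card F - Polynomial.X : Polynomial F).Splits := by
          rw [Polynomial.splits_iff_card_roots, FiniteField.roots_X_pow_card_sub_X,
            FiniteField.X_pow_card_sub_X_natDegree_eq F Fintype.one_lt_card]
          rfl
        have hmon : (Polynomial.X ^ Fintype.card F - Polynomial.X : Polynomial F).Monic := by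
          apply Polynomial.monic_X_pow_sub
          rw [Polynomial.degree_X]; exact_mod_cast Fintype.one_lt_card
        have h := hspl.eq_prod_roots_of_monic hmon
        rw [FiniteField.roots_X_pow_card_sub_X] at h
        exact h
      have h := congrArg (Polynomial.aeval y) hpr
      simp only [map_sub, map_pow, Polynomial.aeval_X, hF, hy, map_prod, Polynomial.aeval_C] at h
      obtain ⟨a, -, ha⟩ := Finset.prod_eq_zero_iff.1 h.symm
      exact ⟨a, (sub_eq_zero.1 ha).symm⟩
    obtain ⟨a, ha⟩ := key _ h3
    obtain ⟨b, hb⟩ := key (x 1) (by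
      have e1 : x 1 ^ q = x 0 ^ (q + 1) - x 1 := by linear_combination -h1
      have e0 : (x 0 ^ q) ^ q = x 0 := by rw [← pow_mul, ← sq]; linear_combination h3
      rw [sq, pow_mul, e1]
      have e2 : (x 0 ^ (q + 1) - x 1) ^ q = (x 0 ^ (q + 1)) ^ q - x 1 ^ q := by
        conv_lhs => rw [hqp, sub_pow_char_pow, ← hqp]
      rw [e2, e1, pow_succ, mul_pow, e0]; ring)
    obtain ⟨i, hi⟩ := hPsurj a b (by
      apply (algebraMap F k).injective
      simp only [map_pow, map_add, ha, hb]
      linear_combination h1)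
    have hx : x = ![algebraMap F k (P i).1, algebraMap F k (P i).2, x 2] := by
      ext j; fin_cases j <;> simp [hi, ha, hb]
    refine ⟨i, ?_⟩
    have h4 := hH i (x 2)
    rw [← hx] at h4
    rw [h4] at h2
    rw [sub_eq_zero.1 h2] at hx
    exact hx
  · rintro ⟨i, rfl⟩
    refine ⟨?_, ?_, ?_⟩
    · have := congrArg (algebraMap F k) (hPcurve i)
      simp only [map_pow, map_add] at this
      simp [this]
    · rw [hH]; simp
    · simp only [Matrix.cons_val_zero]
      rw [← map_pow, ← hF, FiniteField.pow_card, sub_self]
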